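/- Let n ∈ ℕ and ε > 0. There exists a constant c > 0 such that for every non-negative function φ ∈ L₁(ℝⁿ), Σ_{j=0}^∞ 2^{−jnε/(1+ε)} ( Σ_{m∈ℤⁿ} ∫_{Q_{j,m}} (ess inf_{y∈Q_{j,m}} φ(y))^{1+ε} dx )^{1/(1+ε)} ≤ c ‖φ | L₁(ℝⁿ)‖. Equivalently, since the integrand is constant on each cube, Σ_{j=0}^∞ 2^{−jnε/(1+ε)} ( Σ_{m∈ℤⁿ} 2^{−jn} (ess inf_{y∈Q_{j,m}} φ(y))^{1+ε} )^{1/(1+ε)} ≤ c ‖φ | L₁(ℝⁿ)‖. -/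

import Mathlib

/-!
Put `p = 1 + ε`, `θ = 1 / p`, `q = 2⁻ⁿ` and let `a j m` be the essential infimum of `φ` over
`Q_{j,m}`. The weights are chosen so that the `j`-th term is `(q ^ j) ^ (1 - θ)` times
`(∑ₘ q ^ j * a j m ^ p) ^ θ`.

The essential infima are cut into the dyadic levels `2 ^ k`, `k ∈ ℤ`: `a ^ p` is at most
the sum of `2 ^ ((k + 1) p)` over the levels `2 ^ k < a`, and since `θ ≤ 1` the outer power `θ` is
subadditive. This bounds the inner expression by `∑ₖ 2 ^ (k + 1) * W k j ^ θ`, where `W k j` is the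
total volume of the cubes of generation `j` on which `φ` essentially exceeds `2 ^ k`.

Cubes of one generation are disjoint, so `W k j ≤ V k := |{φ > 2 ^ k}|` (`tsum_Qcube_le`). Moreover
`W k j` is zero or at least the volume `q ^ j` of one cube, so only the `j` with `q ^ j ≤ V k`
contribute, and, as `q < 1`, `∑ⱼ (q ^ j) ^ (1 - θ) * W k j ^ θ` is dominated by a geometric series with sum
`C * V k` (`tsum_scales_le`); here `θ < 1`, i.e. `ε > 0`, is essential. Finally
`∑ₖ 2 ^ k * V k ≤ 2 ‖φ‖₁` by the dyadic layer-cake formula (`tsum_volume_levels_le`).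
The nestedness of dyadic cubes, which fails for these centred cubes, is not needed.
-/

open MeasureTheory ENNReal NNReal

noncomputable section

/-- The dyadic cube `Q_{j,m}` in `ℝⁿ`: centered at `2^{-j} m`, with sides parallel to the
coordinate axes and side length `2^{-j}`. -/
def Qcube (n : ℕ) (j : ℕ) (m : Fin n → ℤ) : Set (EuclideanSpace ℝ (Fin n)) :=
  {x | ∀ i, (2 : ℝ) ^ (-(j : ℝ)) * ((m i : ℝ) - 1 / 2) ≤ x i ∧
        x i < (2 : ℝ) ^ (-(j : ℝ)) * ((m i : ℝ) + 1 / 2)}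

lemma tsum_rpow_le {ι : Type*} (f : ι → ℝ≥0∞) {θ : ℝ} (h0 : 0 < θ) (h1 : θ ≤ 1) :
    (∑' i, f i) ^ θ ≤ ∑' i, f i ^ θ := by
  rw [ENNReal.tsum_eq_iSup_sum, ← ENNReal.orderIsoRpow_apply θ h0, OrderIso.map_iSup]
  refine iSup_le fun s => ?_
  rw [ENNReal.orderIsoRpow_apply]
  refine le_trans ?_ (ENNReal.sum_le_tsum s)
  exact Finset.le_sum_of_subadditive (fun x : ℝ≥0∞ => x ^ θ) (ENNReal.zero_rpow_of_pos h0).le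
    (fun a b => ENNReal.rpow_add_le_add_rpow a b h0.le h1) s f

/-- Summation over the scales at a fixed level. With `q = 2⁻ⁿ`, `W j` is the total volume of the
cubes of generation `j` on which `φ` exceeds the level, and `V` is the volume of the level set.
The dichotomy `W j = 0 ∨ q ^ j ≤ W j` is what makes the series geometric: it only starts
at some `j` with `q ^ j ≤ V`. For `q ≥ 1` the constant is `⊤`, so `q < 1` need not be assumed. -/
lemma tsum_scales_le {q : ℝ≥0∞} {θ : ℝ} (h0 : 0 < θ) (h1 : θ < 1)
    {V : ℝ≥0∞} {W : ℕ → ℝ≥0∞} (hWV : ∀ j, W j ≤ V) (hW : ∀ j, W j = 0 ∨ q ^ j ≤ W j) :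
    ∑' j, (q ^ j) ^ (1 - θ) * W j ^ θ ≤ (1 - q ^ (1 - θ))⁻¹ * V := by
  have h1' : 0 < 1 - θ := by linarith
  by_cases hall : ∀ j, W j = 0
  · simp [hall, h0]
  push Not at hall
  have hV0 : V ≠ 0 := by
    obtain ⟨j, hj⟩ := hall
    exact fun h => hj (le_antisymm (h ▸ hWV j) zero_le)
  by_cases hVt : V = ⊤
  · rw [hVt, ENNReal.mul_top]
    · exact le_top
    · exact ENNReal.inv_ne_zero.2 (ne_top_of_le_ne_top ENNReal.one_ne_top tsub_le_self)
  obtain ⟨k, hk, hmin⟩ : ∃ k, W k ≠ 0 ∧ ∀ i < k, W i = 0 := by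
    classical
    exact ⟨Nat.find hall, Nat.find_spec hall, fun i hi => not_not.1 (Nat.find_min hall hi)⟩
  have hqk : q ^ k ≤ V := ((hW k).resolve_left hk).trans (hWV k)
  have hlt : ∀ i ∈ Finset.range k, (q ^ i) ^ (1 - θ) * W i ^ θ = 0 := by
    intro i hi
    simp [hmin i (Finset.mem_range.1 hi), h0]
  rw [← ENNReal.summable.sum_add_tsum_nat_add' (k := k), Finset.sum_eq_zero hlt, zero_add]
  calc ∑' i, (q ^ (i + k)) ^ (1 - θ) * W (i + k) ^ θ
      ≤ ∑' i, (q ^ (1 - θ)) ^ i * V := by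
        refine ENNReal.tsum_le_tsum fun i => ?_
        rw [pow_add, ENNReal.mul_rpow_of_nonneg _ _ h1'.le, mul_assoc]
        have e1 : (q ^ i) ^ (1 - θ) = (q ^ (1 - θ)) ^ i := by
          rw [← ENNReal.rpow_natCast, ← ENNReal.rpow_natCast, ← ENNReal.rpow_mul,
            ← ENNReal.rpow_mul, mul_comm]
        have e2 : V = V ^ (1 - θ) * V ^ θ := by
          rw [← ENNReal.rpow_add _ _ hV0 hVt, sub_add_cancel, ENNReal.rpow_one]
        rw [e1]
        conv_rhs => rw [e2]
        gcongr
        exact hWV _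
    _ = (1 - q ^ (1 - θ))⁻¹ * V := by rw [ENNReal.tsum_mul_right, ENNReal.tsum_geometric]

lemma zpow_two_mono {a b : ℤ} (h : a ≤ b) : (2 : ℝ≥0∞) ^ a ≤ 2 ^ b :=
  ENNReal.zpow_le_of_le one_le_two h

/-- Dyadic layer-cake upper bound: the dyadic levels below `x` sum to at most `2x`. -/
lemma tsum_levels_le {x : ℝ≥0∞} (hx : x ≠ ⊤) :
    ∑' k : ℤ, (if (2 : ℝ≥0∞) ^ k < x then (2 : ℝ≥0∞) ^ k else 0) ≤ 2 * x := by
  rcases eq_or_ne x 0 with rfl | h0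
  · simp
  obtain ⟨N, hN, hN'⟩ := ENNReal.exists_mem_Ioc_zpow h0 hx one_lt_two ENNReal.ofNat_ne_top
  have hinj : Function.Injective (fun i : ℕ => N - (i : ℤ)) := fun a b h => by
    simpa using h
  rw [← hinj.tsum_eq]
  · calc ∑' i : ℕ, (if (2 : ℝ≥0∞) ^ (N - (i : ℤ)) < x then (2 : ℝ≥0∞) ^ (N - (i : ℤ)) else 0)
        ≤ ∑' i : ℕ, (2 : ℝ≥0∞) ^ N * 2⁻¹ ^ i := by
          refine ENNReal.tsum_le_tsum fun i => ?_
          have : (2 : ℝ≥0∞) ^ (N - (i : ℤ)) = 2 ^ N * 2⁻¹ ^ i := by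
            rw [sub_eq_add_neg, ENNReal.zpow_add two_ne_zero ENNReal.ofNat_ne_top,
              ENNReal.zpow_neg, zpow_natCast, ENNReal.inv_pow]
          rw [this]
          split_ifs <;> simp
      _ = 2 ^ N * 2 := by rw [ENNReal.tsum_mul_left, ENNReal.tsum_geometric_two]
      _ ≤ 2 * x := by rw [mul_comm]; gcongr
  · intro k hk
    have hk' : (2 : ℝ≥0∞) ^ k < x := by
      by_contra h
      simp [h] at hk
    have : k ≤ N := by
      by_contra h
      exact absurd (hk'.trans_le hN') (not_lt.2 (zpow_two_mono (by omega)))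
    exact ⟨(N - k).toNat, by simp; omega⟩

/-- Dyadic layer-cake lower bound for the `p`-th power. -/
lemma rpow_le_tsum_levels {x : ℝ≥0∞} (hx : x ≠ ⊤) {p : ℝ} (hp : 0 < p) :
    x ^ p ≤ ∑' k : ℤ, (if (2 : ℝ≥0∞) ^ k < x then ((2 : ℝ≥0∞) ^ (k + 1)) ^ p else 0) := by
  rcases eq_or_ne x 0 with rfl | h0
  · simp [hp]
  obtain ⟨N, hN, hN'⟩ := ENNReal.exists_mem_Ioc_zpow h0 hx one_lt_two ENNReal.ofNat_ne_top
  refine le_trans ?_ (ENNReal.le_tsum N)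
  rw [if_pos hN]
  gcongr

lemma Qcube_eq_preimage (n j : ℕ) (m : Fin n → ℤ) :
    Qcube n j m = (WithLp.ofLp : EuclideanSpace ℝ (Fin n) → Fin n → ℝ) ⁻¹'
      (Set.pi Set.univ fun i => Set.Ico ((2 : ℝ) ^ (-(j : ℝ)) * ((m i : ℝ) - 1 / 2))
        ((2 : ℝ) ^ (-(j : ℝ)) * ((m i : ℝ) + 1 / 2))) := by
  ext x
  simp [Qcube]

lemma measurableSet_Qcube (n j : ℕ) (m : Fin n → ℤ) : MeasurableSet (Qcube n j m) := by
  rw [Qcube_eq_preimage]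
  exact (PiLp.volume_preserving_ofLp (Fin n)).measurable
    (MeasurableSet.univ_pi fun i => measurableSet_Ico)

lemma volume_Qcube (n j : ℕ) (m : Fin n → ℤ) :
    volume (Qcube n j m) = (2 : ℝ≥0∞) ^ (-((j : ℝ) * n)) := by
  rw [Qcube_eq_preimage, (PiLp.volume_preserving_ofLp (Fin n)).measure_preimage
    (MeasurableSet.univ_pi fun i => measurableSet_Ico).nullMeasurableSet, Real.volume_pi_Ico]
  have : ∀ i, (2 : ℝ) ^ (-(j : ℝ)) * ((m i : ℝ) + 1 / 2) -
      (2 : ℝ) ^ (-(j : ℝ)) * ((m i : ℝ) - 1 / 2) = (2 : ℝ) ^ (-(j : ℝ)) := fun i => by ring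
  simp only [this, Finset.prod_const, Finset.card_univ, Fintype.card_fin]
  rw [← ENNReal.ofReal_rpow_of_pos two_pos, ENNReal.ofReal_ofNat, ← ENNReal.rpow_natCast,
    ← ENNReal.rpow_mul, neg_mul]

lemma disjoint_Qcube (n j : ℕ) : Pairwise (Function.onFun Disjoint (Qcube n j)) := by
  intro m m' hne
  rw [Function.onFun, Set.disjoint_left]
  intro x hx hx'
  apply hne
  funext i
  have hpos : (0 : ℝ) < (2 : ℝ) ^ (-(j : ℝ)) := by positivity
  have h1 := lt_of_mul_lt_mul_left ((hx i).1.trans_lt (hx' i).2) hpos.le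
  have h2 := lt_of_mul_lt_mul_left ((hx' i).1.trans_lt (hx i).2) hpos.le
  have h1' : (m i : ℝ) < m' i + 1 := by linarith
  have h2' : (m' i : ℝ) < m i + 1 := by linarith
  have h1'' : m i < m' i + 1 := by exact_mod_cast h1'
  have h2'' : m' i < m i + 1 := by exact_mod_cast h2'
  omega

/-- The cubes on which `g` essentially exceeds `t` fill, up to null sets, disjoint parts of the
level set `{g > t}`. -/
lemma tsum_Qcube_le {n : ℕ} {g : EuclideanSpace ℝ (Fin n) → ℝ≥0∞} (hg : AEMeasurable g)
    (j : ℕ) (t : ℝ≥0∞) :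
    ∑' m : Fin n → ℤ, (if t < essInf g (volume.restrict (Qcube n j m)) then
      (2 : ℝ≥0∞) ^ (-((j : ℝ) * n)) else 0) ≤ volume {x | t < g x} := by
  have hE : NullMeasurableSet {x | t < g x} volume := nullMeasurableSet_lt aemeasurable_const hg
  calc _ ≤ ∑' m : Fin n → ℤ, volume ({x | t < g x} ∩ Qcube n j m) := by
        refine ENNReal.tsum_le_tsum fun m => ?_
        split_ifs with h
        · rw [← volume_Qcube n j m]
          refine measure_mono_ae ?_
          have := (ae_restrict_iff' (measurableSet_Qcube n j m)).1 (ae_lt_of_lt_essInf h)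
          filter_upwards [this] with x hx hxQ
          exact ⟨hx hxQ, hxQ⟩
        · exact zero_le
    _ ≤ volume (⋃ m, {x | t < g x} ∩ Qcube n j m) :=
        tsum_meas_le_meas_iUnion_of_disjoint₀ _
          (fun m => hE.inter (measurableSet_Qcube n j m).nullMeasurableSet)
          (fun m m' hne => ((disjoint_Qcube n j hne).mono
            Set.inter_subset_right Set.inter_subset_right).aedisjoint)
    _ ≤ volume {x | t < g x} := measure_mono (Set.iUnion_subset fun m => Set.inter_subset_left)

/-- The definition of `essInf` by itself allows the value `⊤`; finiteness of `φ` and positivity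
of the volume of the cube exclude it. -/
lemma essInf_Qcube_ne_top {n : ℕ} (φ : EuclideanSpace ℝ (Fin n) → ℝ) (j : ℕ) (m : Fin n → ℤ) :
    essInf (fun y => ENNReal.ofReal (φ y)) (volume.restrict (Qcube n j m)) ≠ ⊤ := by
  intro h
  have hle := ae_essInf_le (f := fun y => ENNReal.ofReal (φ y))
    (μ := volume.restrict (Qcube n j m))
  rw [h] at hle
  have hF : ∀ᵐ y ∂(volume.restrict (Qcube n j m)), False := by
    filter_upwards [hle] with y hy
    simp at hy
  rw [Filter.eventually_false_iff_eq_bot, ae_eq_bot, Measure.restrict_eq_zero, volume_Qcube] at hF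
  have : (2 : ℝ≥0∞) ^ (-((j : ℝ) * n)) ≠ 0 := by simp [ENNReal.rpow_eq_zero_iff]
  exact this hF

/-- The dyadic layer-cake bound integrated in `x`. -/
lemma tsum_volume_levels_le {n : ℕ} {g : EuclideanSpace ℝ (Fin n) → ℝ≥0∞} (hg : AEMeasurable g)
    (hfin : ∀ x, g x ≠ ⊤) :
    ∑' k : ℤ, (2 : ℝ≥0∞) ^ k * volume {x | (2 : ℝ≥0∞) ^ k < g x} ≤ 2 * ∫⁻ x, g x := by
  have hE : ∀ k : ℤ, NullMeasurableSet {x | (2 : ℝ≥0∞) ^ k < g x} volume :=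
    fun k => nullMeasurableSet_lt aemeasurable_const hg
  calc _ = ∑' k : ℤ, ∫⁻ x, {x | (2 : ℝ≥0∞) ^ k < g x}.indicator (fun _ => (2 : ℝ≥0∞) ^ k) x := by
        simp only [lintegral_indicator_const₀ (hE _)]
    _ = ∫⁻ x, ∑' k : ℤ, {x | (2 : ℝ≥0∞) ^ k < g x}.indicator (fun _ => (2 : ℝ≥0∞) ^ k) x :=
        (lintegral_tsum fun k => aemeasurable_const.indicator₀ (hE k)).symm
    _ ≤ ∫⁻ x, 2 * g x := by
        refine lintegral_mono fun x => ?_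
        simp only [Set.indicator_apply, Set.mem_ofPred_eq]
        exact tsum_levels_le (hfin x)
    _ = 2 * ∫⁻ x, g x := lintegral_const_mul' _ _ ENNReal.ofNat_ne_top

/-- For every `ε > 0` there is a constant `c > 0` such that for every non-negative
`φ ∈ L₁(ℝⁿ)` one has
`Σ_j 2^{-jnε/(1+ε)} (Σ_m 2^{-jn} (ess inf_{Q_{j,m}} φ)^{1+ε})^{1/(1+ε)} ≤ c ‖φ | L₁(ℝⁿ)‖`. -/
theorem essInf_cube_sum_le_L1 (n : ℕ) (hn : 0 < n) (ε : ℝ) (hε : 0 < ε) :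
    ∃ c : ℝ≥0, 0 < c ∧ ∀ φ : EuclideanSpace ℝ (Fin n) → ℝ,
      Integrable φ → (∀ x, 0 ≤ φ x) →
      ∑' j : ℕ, (2 : ℝ≥0∞) ^ (-((j : ℝ) * n * ε) / (1 + ε)) *
        (∑' m : Fin n → ℤ, (2 : ℝ≥0∞) ^ (-((j : ℝ) * n)) *
          (essInf (fun y => ENNReal.ofReal (φ y)) (volume.restrict (Qcube n j m)))
            ^ (1 + ε)) ^ (1 / (1 + ε))
      ≤ c * ∫⁻ x, ENNReal.ofReal (φ x) := by
  have hp : 0 < 1 + ε := by linarith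
  set θ : ℝ := 1 / (1 + ε) with hθ
  have hθ0 : 0 < θ := by positivity
  have hθ1 : θ < 1 := by rw [hθ, div_lt_one hp]; linarith
  have hθp : (1 + ε) * θ = 1 := by rw [hθ]; field_simp
  set q : ℝ≥0∞ := (2 : ℝ≥0∞) ^ (-(n : ℝ)) with hq
  have hq1 : q < 1 := ENNReal.rpow_lt_one_of_one_lt_of_neg one_lt_two (by simpa using hn)
  have hqj : ∀ j : ℕ, (2 : ℝ≥0∞) ^ (-((j : ℝ) * n)) = q ^ j := fun j => by
    rw [hq, ← ENNReal.rpow_natCast, ← ENNReal.rpow_mul]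
    congr 1; ring
  have hqj' : ∀ j : ℕ, (2 : ℝ≥0∞) ^ (-((j : ℝ) * n * ε) / (1 + ε)) = (q ^ j) ^ (1 - θ) :=
    fun j => by
      rw [← hqj, ← ENNReal.rpow_mul]
      congr 1; rw [hθ]; field_simp; ring
  set C : ℝ≥0∞ := (1 - q ^ (1 - θ))⁻¹ with hC
  have hCt : C ≠ ⊤ := by
    rw [hC, ENNReal.inv_ne_top]
    exact (tsub_pos_of_lt (ENNReal.rpow_lt_one hq1 (by linarith))).ne'
  have hC0 : C ≠ 0 :=
    ENNReal.inv_ne_zero.2 (ne_top_of_le_ne_top ENNReal.one_ne_top tsub_le_self)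
  have h4t : 4 * C ≠ ⊤ := ENNReal.mul_ne_top ENNReal.ofNat_ne_top hCt
  refine ⟨(4 * C).toNNReal, ENNReal.toNNReal_pos (mul_ne_zero four_ne_zero hC0) h4t, ?_⟩
  intro φ hφ _
  rw [ENNReal.coe_toNNReal h4t]
  set g : EuclideanSpace ℝ (Fin n) → ℝ≥0∞ := fun y => ENNReal.ofReal (φ y) with hg
  have hgm : AEMeasurable g := hφ.1.aemeasurable.ennreal_ofReal
  set a : ℕ → (Fin n → ℤ) → ℝ≥0∞ := fun j m => essInf g (volume.restrict (Qcube n j m)) with ha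
  have hat : ∀ j m, a j m ≠ ⊤ := fun j m => essInf_Qcube_ne_top φ j m
  -- `W k j` is the total volume of the cubes of generation `j` on which `φ` exceeds `2 ^ k`.
  set W : ℤ → ℕ → ℝ≥0∞ := fun k j => ∑' m, (if (2 : ℝ≥0∞) ^ k < a j m then q ^ j else 0) with hW
  set V : ℤ → ℝ≥0∞ := fun k => volume {x | (2 : ℝ≥0∞) ^ k < g x} with hV
  have hWV : ∀ k j, W k j ≤ V k := fun k j => by
    have := tsum_Qcube_le hgm j ((2 : ℝ≥0∞) ^ k)
    rwa [hqj] at this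
  have hWd : ∀ k j, W k j = 0 ∨ q ^ j ≤ W k j := fun k j => by
    by_cases h : ∃ m, (2 : ℝ≥0∞) ^ k < a j m
    · obtain ⟨m, hm⟩ := h
      right
      refine le_trans ?_ (ENNReal.le_tsum m)
      rw [if_pos hm]
    · left
      push Not at h
      simp [hW, fun m => not_lt.2 (h m)]
  have hinner : ∀ j, (∑' m, q ^ j * a j m ^ (1 + ε)) ^ θ
      ≤ ∑' k : ℤ, (2 : ℝ≥0∞) ^ (k + 1) * W k j ^ θ := fun j => by
    calc (∑' m, q ^ j * a j m ^ (1 + ε)) ^ θ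
        ≤ (∑' m, ∑' k : ℤ, ((2 : ℝ≥0∞) ^ (k + 1)) ^ (1 + ε) *
            (if (2 : ℝ≥0∞) ^ k < a j m then q ^ j else 0)) ^ θ := by
          gcongr with m
          refine (mul_le_mul_right (rpow_le_tsum_levels (hat j m) hp) (q ^ j)).trans_eq ?_
          rw [← ENNReal.tsum_mul_left]
          refine tsum_congr fun k => ?_
          split_ifs <;> simp [mul_comm]
      _ = (∑' k : ℤ, ((2 : ℝ≥0∞) ^ (k + 1)) ^ (1 + ε) * W k j) ^ θ := by
          rw [ENNReal.tsum_comm]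
          simp only [ENNReal.tsum_mul_left, hW]
      _ ≤ ∑' k : ℤ, (((2 : ℝ≥0∞) ^ (k + 1)) ^ (1 + ε) * W k j) ^ θ :=
          tsum_rpow_le _ hθ0 hθ1.le
      _ = ∑' k : ℤ, (2 : ℝ≥0∞) ^ (k + 1) * W k j ^ θ := by
          refine tsum_congr fun k => ?_
          rw [ENNReal.mul_rpow_of_nonneg _ _ hθ0.le, ← ENNReal.rpow_mul, hθp, ENNReal.rpow_one]
  simp only [hqj, hqj']
  calc ∑' j : ℕ, (q ^ j) ^ (1 - θ) * (∑' m, q ^ j * a j m ^ (1 + ε)) ^ θ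
      ≤ ∑' j : ℕ, ∑' k : ℤ, (2 : ℝ≥0∞) ^ (k + 1) * ((q ^ j) ^ (1 - θ) * W k j ^ θ) := by
        refine ENNReal.tsum_le_tsum fun j => ?_
        refine (mul_le_mul_right (hinner j) _).trans_eq ?_
        rw [← ENNReal.tsum_mul_left]
        exact tsum_congr fun k => by ring
    _ = ∑' k : ℤ, (2 : ℝ≥0∞) ^ (k + 1) * ∑' j : ℕ, (q ^ j) ^ (1 - θ) * W k j ^ θ := by
        rw [ENNReal.tsum_comm]
        simp only [ENNReal.tsum_mul_left]
    _ ≤ ∑' k : ℤ, (2 : ℝ≥0∞) ^ (k + 1) * (C * V k) := by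
        gcongr with k
        exact tsum_scales_le hθ0 hθ1 (hWV k) (hWd k)
    _ = 2 * C * ∑' k : ℤ, (2 : ℝ≥0∞) ^ k * V k := by
        rw [← ENNReal.tsum_mul_left]
        refine tsum_congr fun k => ?_
        rw [ENNReal.zpow_add two_ne_zero ENNReal.ofNat_ne_top, zpow_one]
        ring
    _ ≤ 2 * C * (2 * ∫⁻ x, g x) := by
        gcongr
        exact tsum_volume_levels_le hgm fun x => ENNReal.ofReal_ne_top
    _ = 4 * C * ∫⁻ x, g x := by ring

end
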